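/- Let G be a t.d.l.c. group, X an open subgroup of G, U and U' compact open subgroups of X, and θ : U ≃ U' a group isomorphism. Let t ∈ G satisfy t u t⁻¹ = θ(u) for all u ∈ U, and suppose that the canonical group homomorphism from the HNN extension X ∗_U^θ (with base group X, associated subgroups U and U', and stable letter mapped to t) to G, restricting to the inclusion on X, is bijective. Then the map φ ↦ (φ|_X, φ(t)) is an ℝ-linear bijection from CHom(G,ℝ) onto CHom(X,ℝ) × ℝ. In particular, dim_ℝ CHom(G,ℝ) = dim_ℝ CHom(X,ℝ) + 1. -/

import Mathlib

/-- The kernel of a homomorphism `φ : G → ℝ` (multiplicative to additive),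
as a subgroup of `G`. -/
def homKer {G : Type*} [Group G] (φ : G → ℝ)
    (hφ : ∀ x y : G, φ (x * y) = φ x + φ y) : Subgroup G where
  carrier := {g : G | φ g = 0}
  one_mem' := by
    have h := hφ 1 1
    rw [one_mul] at h
    show φ 1 = 0
    linarith
  mul_mem' := by
    intro a b ha hb
    show φ (a * b) = 0
    rw [hφ a b]
    simp only [Set.mem_setOf_eq] at ha hb
    rw [ha, hb, add_zero]
  inv_mem' := by
    intro a ha
    simp only [Set.mem_setOf_eq] at ha
    show φ a⁻¹ = 0
    have h := hφ a a⁻¹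
    rw [mul_inv_cancel] at h
    have h1 := hφ 1 1
    rw [one_mul] at h1
    have : φ 1 = 0 := by linarith
    rw [this] at h
    linarith

/-- `CHom G` is the real vector space of group homomorphisms from `G` to the
additive group `ℝ` whose kernel is open (equivalently, which are continuous for
the discrete topology on `ℝ`), as a linear subspace of `G → ℝ`. -/
def CHom (G : Type*) [Group G] [TopologicalSpace G] [IsTopologicalGroup G] :
    Submodule ℝ (G → ℝ) where
  carrier := {φ : G → ℝ | (∀ x y : G, φ (x * y) = φ x + φ y) ∧ IsOpen {g : G | φ g = 0}}
  zero_mem' := by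
    refine ⟨fun x y => by simp, ?_⟩
    simp only [Pi.zero_apply, Set.setOf_true]; exact isOpen_univ
  add_mem' := by
    rintro φ ψ ⟨hφ, hφo⟩ ⟨hψ, hψo⟩
    have hsum : ∀ x y : G, (φ + ψ) (x * y) = (φ + ψ) x + (φ + ψ) y := by
      intro x y
      simp only [Pi.add_apply, hφ x y, hψ x y]
      ring
    refine ⟨hsum, ?_⟩
    have hle : homKer φ hφ ⊓ homKer ψ hψ ≤ homKer (φ + ψ) hsum := by
      rintro g ⟨hg1, hg2⟩
      show (φ + ψ) g = 0
      have h1 : φ g = 0 := hg1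
      have h2 : ψ g = 0 := hg2
      simp [Pi.add_apply, h1, h2]
    have hopen : IsOpen ((homKer φ hφ ⊓ homKer ψ hψ : Subgroup G) : Set G) := by
      have : ((homKer φ hφ ⊓ homKer ψ hψ : Subgroup G) : Set G)
          = {g : G | φ g = 0} ∩ {g : G | ψ g = 0} := rfl
      rw [this]
      exact hφo.inter hψo
    exact Subgroup.isOpen_mono hle hopen
  smul_mem' := by
    rintro c φ ⟨hφ, hφo⟩
    refine ⟨fun x y => by simp only [Pi.smul_apply, hφ x y, smul_eq_mul]; ring, ?_⟩
    rcases eq_or_ne c 0 with rfl | hc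
    · have : {g : G | ((0 : ℝ) • φ) g = 0} = Set.univ := by
        ext g; simp
      rw [this]; exact isOpen_univ
    · have : {g : G | (c • φ) g = 0} = {g : G | φ g = 0} := by
        ext g
        simp [Pi.smul_apply, smul_eq_mul, hc]
      rw [this]
      exact hφo

/-- Restriction of a homomorphism `G → ℝ` with open kernel to a subgroup
(with the subspace topology), as an `ℝ`-linear map `CHom G →ₗ[ℝ] CHom X`. -/
def CHom.restrict {G : Type*} [Group G] [TopologicalSpace G] [IsTopologicalGroup G]
    (X : Subgroup G) : CHom G →ₗ[ℝ] CHom ↥X where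
  toFun φ := ⟨fun x : ↥X => φ.1 (x : G),
    fun x y => by simpa using φ.2.1 (x : G) (y : G),
    by
      have : {x : ↥X | φ.1 (x : G) = 0} = (Subtype.val : ↥X → G) ⁻¹' {g : G | φ.1 g = 0} :=
        rfl
      rw [this]
      exact φ.2.2.preimage continuous_subtype_val⟩
  map_add' φ ψ := rfl
  map_smul' c φ := rfl

/-- Evaluation of elements of `CHom G` at a fixed group element, as a linear
functional. -/
def CHom.eval {G : Type*} [Group G] [TopologicalSpace G] [IsTopologicalGroup G]
    (t : G) : CHom G →ₗ[ℝ] ℝ where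
  toFun φ := φ.1 t
  map_add' φ ψ := rfl
  map_smul' c φ := rfl

/-- The canonical homomorphism from the HNN extension `X ∗_U^θ` to `G`,
restricting to the inclusion on `X` and sending the stable letter to `t`. -/
noncomputable def hnnToGroup {G : Type*} [Group G] (X : Subgroup G) (U U' : Subgroup ↥X)
    (θ : ↥U ≃* ↥U') (t : G)
    (ht : ∀ u : ↥U, t * ((u : ↥X) : G) * t⁻¹ = (((θ u : ↥U') : ↥X) : G)) :
    HNNExtension ↥X U U' θ →* G :=
  HNNExtension.lift X.subtype t (fun a => by
    have h := ht a
    simp only [Subgroup.coe_subtype]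
    rw [← h]
    group)

/-!
By the universal property of the HNN extension, a homomorphism `G → ℝ` is a homomorphism on `X`
satisfying `ψ (θ u) = ψ u` for `u ∈ U`, together with an arbitrary value at `t`. The condition on
`ψ ∈ CHom X` is automatic: `ψ` has open kernel, so it maps a compact subgroup onto a finite subgroup
of `ℝ`, which is trivial. The extension of `ψ` to `G` has open kernel because this kernel contains
that of `ψ`, and `X` is open in `G`.
-/

namespace CHom

variable {G : Type*} [Group G] [TopologicalSpace G] [IsTopologicalGroup G]

/-- An element of `CHom G` as a bundled homomorphism. The target is `Multiplicative ℝ` because `G`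
is written multiplicatively. -/
def toMonoidHom (φ : CHom G) : G →* Multiplicative ℝ :=
  MonoidHom.mk' (fun g ↦ Multiplicative.ofAdd (φ.1 g))
    fun x y ↦ congrArg Multiplicative.ofAdd (φ.2.1 x y)

theorem toAdd_toMonoidHom (φ : CHom G) (g : G) :
    Multiplicative.toAdd (toMonoidHom φ g) = φ.1 g :=
  rfl

theorem mem_ker_toMonoidHom {φ : CHom G} {g : G} : g ∈ (toMonoidHom φ).ker ↔ φ.1 g = 0 :=
  Iff.rfl

theorem isOpen_ker_toMonoidHom (φ : CHom G) : IsOpen ((toMonoidHom φ).ker : Set G) :=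
  φ.2.2

theorem toMonoidHom_injective : Function.Injective (toMonoidHom (G := G)) := fun _ _ h ↦
  Subtype.ext (congrArg DFunLike.coe h)

theorem apply_pow (φ : CHom G) (g : G) (n : ℕ) : φ.1 (g ^ n) = n * φ.1 g := by
  simp only [← toAdd_toMonoidHom, map_pow, toAdd_pow, nsmul_eq_mul]

theorem eq_zero_of_compactSpace [CompactSpace G] (φ : CHom G) : φ = 0 := by
  have : Finite (G ⧸ (toMonoidHom φ).ker) :=
    Subgroup.quotient_finite_of_isOpen _ (isOpen_ker_toMonoidHom φ)
  have index_ne_zero : (toMonoidHom φ).ker.index ≠ 0 :=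
    Subgroup.finiteIndex_of_finite_quotient.index_ne_zero
  ext g
  obtain ⟨n, n_pos, -, pow_mem⟩ := Subgroup.exists_pow_mem_of_index_ne_zero index_ne_zero g
  rw [mem_ker_toMonoidHom, apply_pow] at pow_mem
  exact (mul_eq_zero.mp pow_mem).resolve_left (Nat.cast_ne_zero.mpr n_pos.ne')

theorem apply_eq_zero_of_mem_of_isCompact (φ : CHom G) {K : Subgroup G}
    (hK : IsCompact (K : Set G)) {k : G} (hk : k ∈ K) : φ.1 k = 0 := by
  have : CompactSpace K := isCompact_iff_compactSpace.mp hK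
  exact congrFun (congrArg Subtype.val (eq_zero_of_compactSpace (restrict K φ))) ⟨k, hk⟩

/-- A homomorphism on `G` that restricts to an element `ψ` of `CHom X` on an open subgroup `X`,
as an element of `CHom G`. -/
def ofRestrict {X : Subgroup G} (hX : IsOpen (X : Set G)) (ψ : CHom X)
    (f : G →* Multiplicative ℝ) (hf : f.comp X.subtype = toMonoidHom ψ) : CHom G :=
  ⟨fun g ↦ Multiplicative.toAdd (f g), fun x y ↦ congrArg Multiplicative.toAdd (map_mul f x y), by
    have ker_le : (toMonoidHom ψ).ker.map X.subtype ≤ f.ker := by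
      rw [← hf, ← MonoidHom.comap_ker]
      exact Subgroup.map_comap_le _ _
    exact Subgroup.isOpen_mono ker_le
      (hX.isOpenMap_subtype_val _ (isOpen_ker_toMonoidHom ψ))⟩

theorem restrict_ofRestrict {X : Subgroup G} (hX : IsOpen (X : Set G)) (ψ : CHom X)
    (f : G →* Multiplicative ℝ) (hf : f.comp X.subtype = toMonoidHom ψ) :
    restrict X (ofRestrict hX ψ f hf) = ψ :=
  toMonoidHom_injective hf

end CHom

section HNN

variable {G : Type*} [Group G] {X : Subgroup G} {U U' : Subgroup X} {θ : U ≃* U'} {t : G}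
  {ht : ∀ u : U, t * ((u : X) : G) * t⁻¹ = ((θ u : X) : G)}

variable (ht) in
theorem hnnToGroup_of (x : X) : hnnToGroup X U U' θ t ht (HNNExtension.of x) = x :=
  HNNExtension.lift_of _ _ _ x

variable (ht) in
theorem hnnToGroup_t : hnnToGroup X U U' θ t ht HNNExtension.t = t :=
  HNNExtension.lift_t _ _ _

theorem monoidHom_ext_of_hnnToGroup_surjective {M : Type*} [Monoid M]
    (hsurj : Function.Surjective (hnnToGroup X U U' θ t ht)) {f g : G →* M}
    (hX : f.comp X.subtype = g.comp X.subtype) (hft : f t = g t) : f = g := by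
  refine (MonoidHom.cancel_right hsurj).mp (HNNExtension.hom_ext ?_ ?_)
  · ext x
    simpa only [MonoidHom.comp_apply, hnnToGroup_of, Subgroup.subtype_apply] using
      DFunLike.congr_fun hX x
  · simpa only [MonoidHom.comp_apply, hnnToGroup_t] using hft

theorem exists_monoidHom_of_hnnToGroup_bijective {H : Type*} [Group H]
    (hbij : Function.Bijective (hnnToGroup X U U' θ t ht)) (f : X →* H) (s : H)
    (hs : ∀ u : U, s * f u = f (θ u) * s) :
    ∃ F : G →* H, F.comp X.subtype = f ∧ F t = s := by
  let e := MulEquiv.ofBijective (hnnToGroup X U U' θ t ht) hbij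
  have e_of (x : X) : e (HNNExtension.of x) = x := hnnToGroup_of ht x
  have e_t : e HNNExtension.t = t := hnnToGroup_t ht
  refine ⟨(HNNExtension.lift f s hs).comp e.symm.toMonoidHom, ?_, ?_⟩
  · ext x
    exact (congrArg _ (e.symm_apply_eq.mpr (e_of x).symm)).trans (HNNExtension.lift_of f s hs x)
  · exact (congrArg _ (e.symm_apply_eq.mpr e_t.symm)).trans (HNNExtension.lift_t f s hs)

variable [TopologicalSpace G] [IsTopologicalGroup G]

theorem CHom.restrict_prod_eval_injective
    (hsurj : Function.Surjective (hnnToGroup X U U' θ t ht)) :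
    Function.Injective ((CHom.restrict X).prod (CHom.eval t)) := by
  intro φ ψ h
  obtain ⟨restrict_eq, eval_eq⟩ := Prod.ext_iff.mp h
  exact toMonoidHom_injective <|
    monoidHom_ext_of_hnnToGroup_surjective hsurj (congrArg toMonoidHom restrict_eq) eval_eq

theorem CHom.exists_restrict_eq_and_eval_eq (hX : IsOpen (X : Set G))
    (hbij : Function.Bijective (hnnToGroup X U U' θ t ht)) (ψ : CHom X)
    (hψ : ∀ u : U, ψ.1 (θ u) = ψ.1 u) (r : ℝ) :
    ∃ φ : CHom G, CHom.restrict X φ = ψ ∧ CHom.eval t φ = r := by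
  have conj_invariant (u : U) : toMonoidHom ψ (θ u) = toMonoidHom ψ u :=
    congrArg Multiplicative.ofAdd (hψ u)
  obtain ⟨F, F_restrict, F_t⟩ := exists_monoidHom_of_hnnToGroup_bijective hbij (toMonoidHom ψ)
    (Multiplicative.ofAdd r) fun u ↦ by rw [conj_invariant, mul_comm]
  exact ⟨ofRestrict hX ψ F F_restrict, restrict_ofRestrict hX ψ F F_restrict, F_t⟩

end HNN

theorem chom_of_hnn_general {G : Type*} [Group G] [TopologicalSpace G] [IsTopologicalGroup G]
    (X : Subgroup G) (hXo : IsOpen (X : Set G)) (U U' : Subgroup X)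
    (hUc : IsCompact (U : Set X)) (hU'c : IsCompact (U' : Set X)) (θ : U ≃* U') (t : G)
    (ht : ∀ u : U, t * ((u : X) : G) * t⁻¹ = ((θ u : X) : G))
    (hbij : Function.Bijective (hnnToGroup X U U' θ t ht)) :
    Function.Bijective ((CHom.restrict X).prod (CHom.eval t)) ∧
      Module.rank ℝ (CHom G) = Module.rank ℝ (CHom X) + 1 := by
  have bijective : Function.Bijective ((CHom.restrict X).prod (CHom.eval t)) := by
    refine ⟨CHom.restrict_prod_eval_injective hbij.surjective, fun ⟨ψ, r⟩ ↦ ?_⟩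
    have conj_invariant (u : U) : ψ.1 (θ u) = ψ.1 u := by
      rw [CHom.apply_eq_zero_of_mem_of_isCompact ψ hU'c (θ u).2,
        CHom.apply_eq_zero_of_mem_of_isCompact ψ hUc u.2]
    obtain ⟨φ, restrict_eq, eval_eq⟩ :=
      CHom.exists_restrict_eq_and_eval_eq hXo hbij ψ conj_invariant r
    exact ⟨φ, Prod.ext restrict_eq eval_eq⟩
  refine ⟨bijective, ?_⟩
  simpa only [rank_prod, Module.rank_self, Cardinal.lift_uzero, Cardinal.lift_one] using
    (LinearEquiv.ofBijective _ bijective).rank_eq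

/-- Let `G` be a t.d.l.c. group, `X` an open subgroup, `U, U'`
compact open subgroups of `X`, `θ : U ≃* U'` and `t ∈ G` with `t u t⁻¹ = θ u`
for all `u ∈ U`.  If the canonical homomorphism `X ∗_U^θ → G` from the HNN
extension is bijective, then `φ ↦ (φ|_X, φ t)` is an `ℝ`-linear bijection
`CHom(G,ℝ) ≃ CHom(X,ℝ) × ℝ`; in particular the dimension grows by one. -/
theorem chom_of_hnn {G : Type*} [Group G] [TopologicalSpace G] [IsTopologicalGroup G]
    [LocallyCompactSpace G] [TotallyDisconnectedSpace G] [T2Space G]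
    (X : Subgroup G) (hXo : IsOpen (X : Set G))
    (U U' : Subgroup ↥X)
    (hUc : IsCompact (U : Set ↥X)) (hUo : IsOpen (U : Set ↥X))
    (hU'c : IsCompact (U' : Set ↥X)) (hU'o : IsOpen (U' : Set ↥X))
    (θ : ↥U ≃* ↥U') (t : G)
    (ht : ∀ u : ↥U, t * ((u : ↥X) : G) * t⁻¹ = (((θ u : ↥U') : ↥X) : G))
    (hbij : Function.Bijective (hnnToGroup X U U' θ t ht)) :
    Function.Bijective ((CHom.restrict X).prod (CHom.eval t)) ∧
      Module.rank ℝ (CHom G) = Module.rank ℝ (CHom ↥X) + 1 :=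
  chom_of_hnn_general X hXo U U' hUc hU'c θ t ht hbij
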